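/- Assume condition (R) holds. Let ν₁ and ν₂ be two ergodic invariant Radon measures with supp ν₁ ⊆ supp ν₂. Assume there exist a set M ⊆ ℝ unbounded above and below and an open interval J containing at least two points of supp ν₁ such that for every u ∈ M, for μ^⊗ℕ-almost every sequence (g₁, g₂, …) ∈ Γ^ℕ the set {n : (g_n∘⋯∘g_1)⁻¹(u) ∈ J} is finite. Then there exists a constant C > 0 such that ν₁ = C·ν₂. -/

import Mathlib

open MeasureTheory Filter Set Function Topology
open scoped ENNReal NNReal

section SDS

variable {ι : Type*}

/-- An orientation-preserving homeomorphism of `ℝ`, modeled as a strictly increasing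
surjection (such a map is automatically a homeomorphism of `ℝ`). -/
def IsOPH (g : ℝ → ℝ) : Prop := StrictMono g ∧ Function.Surjective g

/-- The Markov chain `X_n^x = g_{ω (n-1)} ∘ ⋯ ∘ g_{ω 0} (x)` driven by the sequence `ω`. -/
def chain (G : ι → ℝ → ℝ) (ω : ℕ → ι) (x : ℝ) : ℕ → ℝ
  | 0 => x
  | n + 1 => G (ω n) (chain G ω x n)

/-- Composition `G l₀ ∘ G l₁ ∘ ⋯` along a list `l`. -/
def comps (G : ι → ℝ → ℝ) (l : List ι) : ℝ → ℝ := l.foldr (fun i f => G i ∘ f) id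

/-- The semigroup `Γ*` generated by the maps `G i` under composition. -/
def sgen (G : ι → ℝ → ℝ) : Set (ℝ → ℝ) := {f | ∃ l : List ι, l ≠ [] ∧ f = comps G l}

variable [MeasurableSpace ι]

/-- `Q` is the product measure `μm^{⊗ℕ}` on `ι^ℕ` (for a discrete base measure `μm`
this property characterizes the product measure). -/
def IsProd (μm : Measure ι) (Q : Measure (ℕ → ι)) : Prop :=
  ∀ (n : ℕ) (c : ℕ → ι),
    Q {ω : ℕ → ι | ∀ k < n, ω k = c k} = ∏ k ∈ Finset.range n, μm {c k}

/-- A Radon measure on `ℝ`: a Borel measure which is finite on compact sets. -/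
def IsRadon (ν : Measure ℝ) : Prop := ∀ K : Set ℝ, IsCompact K → ν K < ⊤

/-- Invariance of `ν` for the system generated by the discrete measure `μm` on the
maps `G i`:  `∫ f dν = Σ_g μ(g) ∫ f(g x) dν(x)` for every continuous compactly
supported `f`. -/
def IsInv (G : ι → ℝ → ℝ) (μm : Measure ι) (ν : Measure ℝ) : Prop :=
  ∀ f : ℝ → ℝ, Continuous f → HasCompactSupport f →
    ∫ x, f x ∂ν = ∑' i : ι, (μm {i}).toReal * ∫ x, f (G i x) ∂ν

/-- Ergodicity: `ν` is invariant and any Borel set whose restriction is again invariant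
is either null or conull. -/
def IsErg (G : ι → ℝ → ℝ) (μm : Measure ι) (ν : Measure ℝ) : Prop :=
  IsInv G μm ν ∧
    ∀ A : Set ℝ, MeasurableSet A → IsInv G μm (ν.restrict A) → ν A = 0 ∨ ν Aᶜ = 0

/-- The support of a measure: points all of whose open neighbourhoods have positive
measure. -/
def msupp (ν : Measure ℝ) : Set ℝ := {x | ∀ U : Set ℝ, IsOpen U → x ∈ U → 0 < ν U}

/-- Condition (R): there is a compact interval visited infinitely often, a.s., from any
starting point. -/
def CondR (G : ι → ℝ → ℝ) (Q : Measure (ℕ → ι)) : Prop :=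
  ∃ a b : ℝ, a ≤ b ∧ ∀ x : ℝ, ∀ᵐ ω ∂Q, ∃ᶠ n in atTop, chain G ω x n ∈ Icc a b

/-- Condition (C): there is an interval `I` such that any compact set can be mapped
into `I` by an element of the semigroup `Γ*`. -/
def CondC (G : ι → ℝ → ℝ) : Prop :=
  ∃ a b : ℝ, ∀ K : Set ℝ, IsCompact K → ∃ g ∈ sgen G, g '' K ⊆ Icc a b

/-- Condition (U): from any point one can move both up and down. -/
def CondU (G : ι → ℝ → ℝ) : Prop :=
  ∀ x : ℝ, ∃ i j : ι, G i x < x ∧ x < G j x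

end SDS

/-- `ℓ_n⁻¹(u) = g_{ω 0}⁻¹ ∘ g_{ω 1}⁻¹ ∘ ⋯ ∘ g_{ω (n-1)}⁻¹ (u)`, the inverse of the
random walk applied to `u`. -/
noncomputable def invIter {ι : Type*} (G : ι → ℝ → ℝ) (ω : ℕ → ι) (u : ℝ) (n : ℕ) : ℝ :=
  ((List.range n).map ω).foldr (fun i y => Function.invFun (G i) y) u

/-!
Let `g` be integrable with `∫ g dν < 0`, where `ν` is ergodic and invariant. Recurrence makes the
skew product of the chain conservative, so bounded harmonic functions are `ν`-a.e. constant; applied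
to the probability that the sums `∑_{k < n} g (X_k^x)` are bounded above, this gives a zero-one law,
and the maximal ergodic inequality shows that the probability is not zero. Hence these sums are
almost surely bounded above for `ν`-a.e. starting point `x`.

For `u ∈ M`, transience of `J` means that two trajectories started in `J` and driven by the same
maps eventually lie on the same side of `u`. If `x < y` in `J` and `u, v, v' ∈ M`, then up to
finitely many times the two trajectories visit `(v, v']` simultaneously, while every visit of the
upper one to `(u, t]` is also one of the lower one. Taking `x` generic for one measure and `y`
generic for the other, and `g` a combination of the indicators of `(u, t]` and `(v, v']`, compares
the ratios `νᵢ (u, t] / νᵢ (v, v']`; exchanging the roles of the two measures gives equality.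

The σ-algebra on the index set `ι` is arbitrary, so points of `ι` need not be measurable. A further
index in the atom of a chosen one would make `ν` strictly larger than its image under the chain that
uses only the chosen indices, which conservativity forbids.
-/

/-! ### Maximal ergodic inequality -/

section MaximalErgodic

variable {α : Type*} {T : α → α} {g : α → ℝ}

/-- The running maximum `max_{n ≤ N} ∑_{k < n} g (T^k z)` of the Birkhoff sums, defined by its
recursion in `N`. -/
noncomputable def maxBirkhoffSum (T : α → α) (g : α → ℝ) : ℕ → α → ℝ
  | 0, _ => 0
  | N + 1, z => max 0 (g z + maxBirkhoffSum T g N (T z))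

lemma maxBirkhoffSum_nonneg (N : ℕ) (z : α) : 0 ≤ maxBirkhoffSum T g N z := by
  cases N <;> simp [maxBirkhoffSum]

lemma maxBirkhoffSum_monotone (z : α) : Monotone fun N => maxBirkhoffSum T g N z := by
  refine monotone_nat_of_le_succ fun N => ?_
  induction N generalizing z with
  | zero => exact maxBirkhoffSum_nonneg 1 z
  | succ N ih => exact max_le_max_left 0 (add_le_add_right (ih (T z)) (g z))

lemma birkhoffSum_le_maxBirkhoffSum (N : ℕ) (z : α) :
    birkhoffSum T g N z ≤ maxBirkhoffSum T g N z := by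
  induction N generalizing z with
  | zero => simp [maxBirkhoffSum]
  | succ N ih =>
    rw [birkhoffSum_succ']
    exact le_max_of_le_right (add_le_add_right (ih (T z)) (g z))

lemma maxBirkhoffSum_sub_comp_le_indicator (N : ℕ) (z : α) :
    maxBirkhoffSum T g N z - maxBirkhoffSum T g N (T z) ≤
      {z | 0 < maxBirkhoffSum T g N z}.indicator g z := by
  by_cases hz : 0 < maxBirkhoffSum T g N z
  · rw [indicator_of_mem (by exact hz)]
    cases N with
    | zero => simp [maxBirkhoffSum] at hz
    | succ N =>
      have hmax : maxBirkhoffSum T g (N + 1) z = g z + maxBirkhoffSum T g N (T z) :=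
        max_eq_right_of_lt ((lt_max_iff.1 hz).resolve_left (lt_irrefl 0))
      have hmono : maxBirkhoffSum T g N (T z) ≤ maxBirkhoffSum T g (N + 1) (T z) :=
        maxBirkhoffSum_monotone (T z) N.le_succ
      linarith
  · rw [indicator_of_notMem (by exact hz)]
    linarith [maxBirkhoffSum_nonneg (T := T) (g := g) N (T z)]

variable [MeasurableSpace α] {μ : Measure α}

lemma measurable_maxBirkhoffSum (hT : Measurable T) (hg : Measurable g) (N : ℕ) :
    Measurable (maxBirkhoffSum T g N) := by
  induction N with
  | zero => exact measurable_const
  | succ N ih => exact measurable_const.max (hg.add (ih.comp hT))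

lemma integrable_maxBirkhoffSum (hT : MeasurePreserving T μ μ) (hg : Integrable g μ) (N : ℕ) :
    Integrable (maxBirkhoffSum T g N) μ := by
  induction N with
  | zero => exact integrable_zero _ _ _
  | succ N ih =>
    exact (integrable_zero _ _ _).sup (hg.add (hT.integrable_comp_of_integrable ih))

lemma integral_indicator_maxBirkhoffSum_pos_nonneg (hT : MeasurePreserving T μ μ)
    (hgm : Measurable g) (hg : Integrable g μ) (N : ℕ) :
    0 ≤ ∫ z, {z | 0 < maxBirkhoffSum T g N z}.indicator g z ∂μ := by
  have hM := integrable_maxBirkhoffSum hT hg N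
  have hMT : Integrable (fun z => maxBirkhoffSum T g N (T z)) μ :=
    hT.integrable_comp_of_integrable hM
  have hmeas := measurable_maxBirkhoffSum hT.measurable hgm N
  calc (0 : ℝ) = ∫ z, (maxBirkhoffSum T g N z - maxBirkhoffSum T g N (T z)) ∂μ := by
        rw [integral_sub hM hMT, ← integral_map hT.aemeasurable
          (by rw [hT.map_eq]; exact hmeas.aestronglyMeasurable), hT.map_eq, sub_self]
    _ ≤ _ := integral_mono (hM.sub hMT)
        (hg.indicator (measurableSet_lt measurable_const hmeas))
        (maxBirkhoffSum_sub_comp_le_indicator N)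

theorem integral_nonneg_of_ae_exists_birkhoffSum_pos (hT : MeasurePreserving T μ μ)
    (hgm : Measurable g) (hg : Integrable g μ) (hpos : ∀ᵐ z ∂μ, ∃ n, 0 < birkhoffSum T g n z) :
    0 ≤ ∫ z, g z ∂μ := by
  have hlim : Tendsto (fun N => ∫ z, {z | 0 < maxBirkhoffSum T g N z}.indicator g z ∂μ) atTop
      (𝓝 (∫ z, g z ∂μ)) := by
    refine tendsto_integral_of_dominated_convergence (fun z => ‖g z‖)
      (fun N => (hgm.indicator (measurableSet_lt measurable_const
        (measurable_maxBirkhoffSum hT.measurable hgm N))).aestronglyMeasurable) hg.norm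
      (fun N => .of_forall fun z => norm_indicator_le_norm_self _ _) ?_
    filter_upwards [hpos] with z ⟨n, hn⟩
    refine tendsto_const_nhds.congr' ?_
    filter_upwards [eventually_ge_atTop n] with N hN
    have hz : 0 < maxBirkhoffSum T g N z :=
      hn.trans_le ((birkhoffSum_le_maxBirkhoffSum n z).trans (maxBirkhoffSum_monotone z hN))
    exact (indicator_of_mem (s := {z | 0 < maxBirkhoffSum T g N z}) hz g).symm
  exact ge_of_tendsto' hlim (integral_indicator_maxBirkhoffSum_pos_nonneg hT hgm hg)

end MaximalErgodic

/-! ### Conservativity from recurrence -/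

section Conservative

variable {α : Type*} [MeasurableSpace α] {μ η : Measure α} {T : α → α} {K : Set α}

lemma sum_measure_preimage_iterate_le (hT : Measurable T) (hle : η + μ.map T ≤ μ)
    (hK : MeasurableSet K) (N : ℕ) :
    ∑ n ∈ Finset.range N, η (T^[n] ⁻¹' K) + μ (T^[N] ⁻¹' K) ≤ μ K := by
  induction N with
  | zero => simp
  | succ N ih =>
    have hstep : η (T^[N] ⁻¹' K) + μ (T^[N + 1] ⁻¹' K) ≤ μ (T^[N] ⁻¹' K) := by
      have := hle (T^[N] ⁻¹' K)
      rwa [Measure.add_apply, Measure.map_apply hT (hT.iterate N hK), ← preimage_comp,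
        ← iterate_succ] at this
    calc _ = ∑ n ∈ Finset.range N, η (T^[n] ⁻¹' K) +
          (η (T^[N] ⁻¹' K) + μ (T^[N + 1] ⁻¹' K)) := by rw [Finset.sum_range_succ, add_assoc]
      _ ≤ _ := by gcongr
      _ ≤ μ K := ih

lemma eq_zero_of_add_map_le (hT : Measurable T) (hle : η + μ.map T ≤ μ)
    (hK : MeasurableSet K) (hKtop : μ K ≠ ∞) (hrec : ∀ᵐ z ∂η, ∃ᶠ n in atTop, T^[n] z ∈ K) :
    η = 0 := by
  have hsum : ∑' n, η (T^[n] ⁻¹' K) ≤ μ K := ENNReal.tsum_le_of_sum_range_le fun N =>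
    le_self_add.trans (sum_measure_preimage_iterate_le hT hle hK N)
  have hfin : ∀ᵐ z ∂η, ¬∃ᶠ n in atTop, T^[n] z ∈ K := by
    simpa only [ae_iff, not_not] using
      measure_setOfPred_frequently_eq_zero (p := fun n z => T^[n] z ∈ K)
        (hsum.trans_lt hKtop.lt_top).ne
  rw [← ae_eq_bot, ← eventually_false_iff_eq_bot]
  filter_upwards [hrec, hfin] with z hz hz' using hz' hz

theorem conservative_of_ae_frequently_mem (hT : MeasurePreserving T μ μ)
    (hK : MeasurableSet K) (hKtop : μ K ≠ ∞) (hrec : ∀ᵐ z ∂μ, ∃ᶠ n in atTop, T^[n] z ∈ K) :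
    Conservative T μ := by
  refine ⟨hT.quasiMeasurePreserving, fun W hW => not_imp_comm.1 fun hwander => ?_⟩
  push Not at hwander
  let avoid : Set α := {z | ∀ n, T^[n] z ∉ W}
  have havoid : MeasurableSet avoid :=
    measurableSet_setOfPred.2 (.forall fun n => (hT.measurable.iterate n hW).compl.mem)
  have hpre : T ⁻¹' avoid = W ∪ avoid := by
    ext z
    refine ⟨fun hz => or_iff_not_imp_left.2 fun hzW n => ?_, ?_⟩
    · cases n with
      | zero => exact hzW
      | succ n => exact hz n
    · rintro (hz | hz) n
      · exact hwander z hz (n + 1) n.succ_ne_zero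
      · exact hz (n + 1)
  have hdecomp : (μ.restrict W).map T + (μ.restrict avoid).map T = μ.restrict avoid := by
    have hdisj : Disjoint W avoid := disjoint_left.2 fun z hz hz' => hz' 0 hz
    rw [← Measure.map_add _ _ hT.measurable, ← Measure.restrict_union hdisj havoid, ← hpre,
      ← Measure.restrict_map hT.measurable havoid, hT.map_eq]
  have hle : (μ.restrict W).map T ≤ μ :=
    Measure.le_add_right le_rfl |>.trans (hdecomp.trans_le Measure.restrict_le_self)
  have hzero := eq_zero_of_add_map_le hT.measurable hdecomp.le hK
    (ne_top_of_le_ne_top hKtop (Measure.restrict_apply_le avoid K)) (ae_mono hle hrec)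
  rwa [Measure.map_eq_zero_iff hT.aemeasurable.restrict, Measure.restrict_eq_zero] at hzero

lemma ae_eq_zero_of_tendsto_comp_iterate (hT : Conservative T μ) {w : α → ℝ≥0∞}
    (hw : Measurable w) (hlim : ∀ᵐ z ∂μ, Tendsto (fun n => w (T^[n] z)) atTop (𝓝 0)) :
    w =ᵐ[μ] 0 := by
  have hsmall (k : ℕ) : ∀ᵐ z ∂μ, w z < (k + 1 : ℝ≥0∞)⁻¹ := by
    have hmeas : NullMeasurableSet {z | (k + 1 : ℝ≥0∞)⁻¹ ≤ w z} μ :=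
      (measurableSet_le measurable_const hw).nullMeasurableSet
    filter_upwards [hT.ae_mem_imp_frequently_image_mem hmeas, hlim] with z hz hz0
    by_contra! hlt
    obtain ⟨n, hn, hn'⟩ := ((hz hlt).and_eventually (hz0.eventually_lt_const
      (ENNReal.inv_pos.2 (by finiteness : (k + 1 : ℝ≥0∞) ≠ ∞)))).exists
    exact hn.not_gt hn'
  filter_upwards [ae_all_iff.2 hsmall] with z hz
  by_contra hne
  obtain ⟨k, hk⟩ := ENNReal.exists_inv_nat_lt hne
  exact (hz k).not_ge ((ENNReal.inv_le_inv.2 le_self_add).trans hk.le)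

end Conservative

/-! ### The skew product of an iterated function system -/

section SkewProduct

variable {E ι : Type*} [MeasurableSpace E] [MeasurableSpace ι]

/-- The law `m^{⊗ℕ}` of an i.i.d. sequence with common law `m`. -/
noncomputable abbrev iidMeasure (m : Measure ι) : Measure (ℕ → ι) :=
  Measure.infinitePi fun _ : ℕ => m

/-- The skew product `(x, ω) ↦ (G_{ω 0} x, shift ω)` over the one-sided shift. -/
def skewProduct (G : ι → E → E) (z : E × (ℕ → ι)) : E × (ℕ → ι) :=
  (G (z.2 0) z.1, fun n => z.2 (n + 1))

/-- The law of `G_i x` when `(x, i)` has law `ν ⊗ m`; `ν` is stationary if it equals its step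
measure. -/
noncomputable def stepMeasure (G : ι → E → E) (m : Measure ι) (ν : Measure E) : Measure E :=
  (ν.prod m).map fun p => G p.2 p.1

variable {G : ι → E → E} {m : Measure ι} {ν ρ : Measure E} {K : Set E}

section Measurable

variable (hG : Measurable fun p : E × ι => G p.2 p.1)
include hG

lemma measurable_skewProduct : Measurable (skewProduct G) :=
  (hG.comp (measurable_fst.prodMk ((measurable_pi_apply 0).comp measurable_snd))).prodMk
    (measurable_pi_lambda _ fun n => (measurable_pi_apply (n + 1)).comp measurable_snd)

lemma measurableSet_frequently_skewProduct_mem (hK : MeasurableSet K) :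
    MeasurableSet {z : E × (ℕ → ι) | ∃ᶠ n in atTop, ((skewProduct G)^[n] z).1 ∈ K} := by
  have hvisit (n : ℕ) : MeasurableSet {z : E × (ℕ → ι) | ((skewProduct G)^[n] z).1 ∈ K} :=
    (measurable_fst.comp ((measurable_skewProduct hG).iterate n)) hK
  convert MeasurableSet.measurableSet_limsup hvisit using 1
  ext z
  rw [mem_limsup_iff_frequently_mem]
  rfl

end Measurable

variable [IsProbabilityMeasure m]

lemma eq_iidMeasure_of_forall_range {P : Measure (ℕ → ι)}
    (hP : ∀ (n : ℕ) (t : ℕ → Set ι), (∀ k, MeasurableSet (t k)) →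
      P ((Finset.range n : Set ℕ).pi t) = ∏ k ∈ Finset.range n, m (t k)) :
    P = iidMeasure m := by
  classical
  refine Measure.eq_infinitePi _ fun s t ht => ?_
  let t' (k : ℕ) : Set ι := if k ∈ s then t k else univ
  obtain ⟨n, hn⟩ := Finset.exists_nat_subset_range s
  have hpi : (s : Set ℕ).pi t = (Finset.range n : Set ℕ).pi t' := by
    ext ω
    refine ⟨fun hω k _ => ?_, fun hω k hk => by simpa [t', Finset.mem_coe.1 hk] using hω k (hn hk)⟩
    by_cases hk : k ∈ s <;> simp [t', hk, hω k]
  have hprod : ∏ k ∈ s, m (t k) = ∏ k ∈ Finset.range n, m (t' k) := by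
    simp only [t', apply_ite m, measure_univ, Finset.prod_ite_mem, Finset.inter_eq_right.2 hn]
  rw [hpi, hprod]
  exact hP n t' fun k => by dsimp only [t']; split_ifs <;> simp [ht]

lemma measurePreserving_head_tail :
    MeasurePreserving (fun ω : ℕ → ι => (ω 0, fun n => ω (n + 1)))
      (iidMeasure m) (m.prod (iidMeasure m)) := by
  let cons (p : ι × (ℕ → ι)) (n : ℕ) : ι := n.casesOn p.1 p.2
  have hcons : Measurable cons := measurable_pi_lambda _ fun n => by
    cases n with
    | zero => exact measurable_fst
    | succ n => exact (measurable_pi_apply n).comp measurable_snd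
  have hmap : (m.prod (iidMeasure m)).map cons = iidMeasure m := by
    refine eq_iidMeasure_of_forall_range fun n t ht => ?_
    rw [Measure.map_apply hcons (.pi (Finset.countable_toSet _) fun k _ => ht k)]
    cases n with
    | zero => simp
    | succ n =>
      have hpre : cons ⁻¹' (Finset.range (n + 1) : Set ℕ).pi t =
          t 0 ×ˢ (Finset.range n : Set ℕ).pi fun k => t (k + 1) := by
        ext ⟨i, ω⟩
        simp only [mem_preimage, mem_prod, Set.mem_pi, Finset.coe_range, mem_Iio,
          Nat.forall_lt_succ_left]
        rfl
      rw [hpre, Measure.prod_prod, Measure.infinitePi_pi _ fun k _ => ht (k + 1),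
        Finset.prod_range_succ', mul_comm]
  have hht : Measurable fun ω : ℕ → ι => (ω 0, fun n => ω (n + 1)) :=
    (measurable_pi_apply 0).prodMk (measurable_pi_lambda _ fun n => measurable_pi_apply (n + 1))
  refine ⟨hht, ?_⟩
  rw [← hmap, Measure.map_map hht hcons, hmap]
  exact Measure.map_id

lemma lintegral_skewProduct (hG : Measurable fun p : E × ι => G p.2 p.1)
    {F : E × (ℕ → ι) → ℝ≥0∞} (hF : Measurable F) (x : E) :
    ∫⁻ ω, F (skewProduct G (x, ω)) ∂iidMeasure m =
      ∫⁻ i, ∫⁻ ω, F (G i x, ω) ∂iidMeasure m ∂m := by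
  have hstep : Measurable fun p : ι × (ℕ → ι) => F (G p.1 x, p.2) :=
    hF.comp ((hG.comp (measurable_const.prodMk measurable_fst)).prodMk measurable_snd)
  rw [← lintegral_prod _ hstep.aemeasurable,
    ← (measurePreserving_head_tail (m := m)).lintegral_comp hstep]
  rfl

lemma measurePreserving_skewProduct [SFinite ν] (hG : Measurable fun p : E × ι => G p.2 p.1) :
    MeasurePreserving (skewProduct G) (ν.prod (iidMeasure m))
      ((stepMeasure G m ν).prod (iidMeasure m)) := by
  have hsplit := (MeasurePreserving.id ν).prod (measurePreserving_head_tail (m := m))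
  have hassoc : MeasurePreserving MeasurableEquiv.prodAssoc.symm
      (ν.prod (m.prod (iidMeasure m))) ((ν.prod m).prod (iidMeasure m)) :=
    (measurePreserving_prodAssoc ν m (iidMeasure m)).symm _
  have hstep : MeasurePreserving (fun p : E × ι => G p.2 p.1) (ν.prod m) (stepMeasure G m ν) :=
    ⟨hG, rfl⟩
  exact (hstep.prod (MeasurePreserving.id (iidMeasure m))).comp (hassoc.comp hsplit)

section Recurrent

variable (hG : Measurable fun p : E × ι => G p.2 p.1) (hK : MeasurableSet K)
  (hrec : ∀ x, ∀ᵐ ω ∂iidMeasure m, ∃ᶠ n in atTop, ((skewProduct G)^[n] (x, ω)).1 ∈ K)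
include hG hK hrec

lemma ae_frequently_skewProduct_mem (ν : Measure E) :
    ∀ᵐ z ∂ν.prod (iidMeasure m), ∃ᶠ n in atTop, (skewProduct G)^[n] z ∈ K ×ˢ univ := by
  simpa only [mem_prod, mem_univ, and_true] using
    (Measure.ae_prod_iff_ae_ae (measurableSet_frequently_skewProduct_mem hG hK)).2 (.of_forall hrec)

lemma conservative_skewProduct [SFinite ν] (hν : stepMeasure G m ν = ν) (hKtop : ν K ≠ ∞) :
    Conservative (skewProduct G) (ν.prod (iidMeasure m)) := by
  have hmp := measurePreserving_skewProduct (ν := ν) (m := m) hG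
  rw [hν] at hmp
  exact conservative_of_ae_frequently_mem hmp (hK.prod .univ) (by simpa using hKtop)
    (ae_frequently_skewProduct_mem hG hK hrec ν)

lemma eq_zero_of_add_stepMeasure_le [SFinite ν] [SFinite ρ] (hle : ρ + stepMeasure G m ν ≤ ν)
    (hKtop : ν K ≠ ∞) : ρ = 0 := by
  have hmp := measurePreserving_skewProduct (ν := ν) (m := m) hG
  have hprod : ρ.prod (iidMeasure m) = 0 := by
    have : SFinite (stepMeasure G m ν) := by unfold stepMeasure; infer_instance
    have hle' : ρ.prod (iidMeasure m) + (ν.prod (iidMeasure m)).map (skewProduct G) ≤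
        ν.prod (iidMeasure m) := by
      rw [hmp.map_eq, ← Measure.add_prod]
      exact Measure.prod_mono hle le_rfl
    exact eq_zero_of_add_map_le hmp.measurable hle' (hK.prod .univ) (by simpa using hKtop)
      (ae_frequently_skewProduct_mem hG hK hrec ρ)
  simpa using congrArg (Measure.map Prod.fst) hprod

end Recurrent

end SkewProduct

/-! ### Bounded harmonic functions of a recurrent system are constant -/

section Harmonic

lemma lintegral_enorm_sub_integral_sq_add {Ω : Type*} [MeasurableSpace Ω] {P : Measure Ω}
    [IsProbabilityMeasure P] {X : Ω → ℝ} (hX : MemLp X 2 P) :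
    ∫⁻ a, ‖X a - ∫ b, X b ∂P‖ₑ ^ 2 ∂P + ‖∫ a, X a ∂P‖ₑ ^ 2 = ∫⁻ a, ‖X a‖ₑ ^ 2 ∂P := by
  have hsq (y : ℝ) : ‖y‖ₑ ^ 2 = ENNReal.ofReal (y ^ 2) := by
    rw [Real.enorm_eq_ofReal_abs, ← ENNReal.ofReal_pow (abs_nonneg y), sq_abs]
  calc _ = ENNReal.ofReal (ProbabilityTheory.variance X P + (∫ a, X a ∂P) ^ 2) := by
        rw [ENNReal.ofReal_add (ProbabilityTheory.variance_nonneg X P) (sq_nonneg _),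
          ProbabilityTheory.ofReal_variance hX, hsq (∫ a, X a ∂P)]
        rfl
    _ = ENNReal.ofReal (∫ a, X a ^ 2 ∂P) := by
        rw [ProbabilityTheory.variance_eq_sub hX, sub_add_cancel]
        rfl
    _ = _ := by
        rw [ofReal_integral_eq_lintegral_ofReal hX.integrable_sq (.of_forall fun a => sq_nonneg _)]
        simp only [hsq]

variable {E ι : Type*} [MeasurableSpace E] [MeasurableSpace ι] {G : ι → E → E} {m : Measure ι}
  {ν : Measure E} {φ : E → ℝ} {C : ℝ≥0}

/-- The squared increment of `φ` along the first step of the chain coded by `z`. -/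
noncomputable def sqIncrement (G : ι → E → E) (φ : E → ℝ) (z : E × (ℕ → ι)) : ℝ≥0∞ :=
  ‖φ (skewProduct G z).1 - φ z.1‖ₑ ^ 2

lemma measurable_sqIncrement (hG : Measurable fun p : E × ι => G p.2 p.1) (hφ : Measurable φ) :
    Measurable (sqIncrement G φ) :=
  ((hφ.comp (measurable_fst.comp (measurable_skewProduct hG))).sub
    (hφ.comp measurable_fst)).enorm.pow_const 2

section BoundedHarmonic

variable [IsProbabilityMeasure m] (hG : Measurable fun p : E × ι => G p.2 p.1) (hφ : Measurable φ)
  (hbdd : ∀ x, ‖φ x‖₊ ≤ C) (hharm : ∀ x, ∫ i, φ (G i x) ∂m = φ x)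
include hG hφ hbdd hharm

lemma lintegral_sqIncrement_add (x : E) :
    ∫⁻ ω, sqIncrement G φ (x, ω) ∂iidMeasure m + ‖φ x‖ₑ ^ 2 = ∫⁻ i, ‖φ (G i x)‖ₑ ^ 2 ∂m := by
  have hmeas : Measurable fun i => φ (G i x) := hφ.comp (hG.comp measurable_prodMk_left)
  have hmem : MemLp (fun i => φ (G i x)) 2 m :=
    .of_bound hmeas.aestronglyMeasurable C (.of_forall fun i => hbdd (G i x))
  have hvar := lintegral_enorm_sub_integral_sq_add hmem
  rw [hharm, ← (measurePreserving_eval_infinitePi (fun _ : ℕ => m) 0).lintegral_comp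
    ((hmeas.sub_const (φ x)).enorm.pow_const 2)] at hvar
  exact hvar

lemma sum_lintegral_sqIncrement_add_le (N : ℕ) (x : E) :
    ∑ n ∈ Finset.range N, ∫⁻ ω, sqIncrement G φ ((skewProduct G)^[n] (x, ω)) ∂iidMeasure m +
      ‖φ x‖ₑ ^ 2 ≤ C ^ 2 := by
  have hmeas (n : ℕ) : Measurable fun z => sqIncrement G φ ((skewProduct G)^[n] z) :=
    (measurable_sqIncrement hG hφ).comp ((measurable_skewProduct hG).iterate n)
  induction N generalizing x with
  | zero =>
    simp only [Finset.range_zero, Finset.sum_empty, zero_add]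
    gcongr
    exact ENNReal.coe_le_coe.2 (hbdd x)
  | succ N ih =>
    have hstep : Measurable fun i => G i x := hG.comp measurable_prodMk_left
    have hnorm : Measurable fun i => ‖φ (G i x)‖ₑ ^ 2 := (hφ.comp hstep).enorm.pow_const 2
    calc _ = ∑ n ∈ Finset.range N,
            ∫⁻ i, ∫⁻ ω, sqIncrement G φ ((skewProduct G)^[n] (G i x, ω)) ∂iidMeasure m ∂m +
          ∫⁻ i, ‖φ (G i x)‖ₑ ^ 2 ∂m := by
          rw [Finset.sum_range_succ', add_assoc, iterate_zero,
            ← lintegral_sqIncrement_add hG hφ hbdd hharm x]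
          simp only [← lintegral_skewProduct hG (hmeas _) x, iterate_succ_apply, id]
      _ = ∫⁻ i, (∑ n ∈ Finset.range N,
            ∫⁻ ω, sqIncrement G φ ((skewProduct G)^[n] (G i x, ω)) ∂iidMeasure m +
          ‖φ (G i x)‖ₑ ^ 2) ∂m := by
          rw [lintegral_add_right _ hnorm, lintegral_finsetSum]
          exact fun n _ => (hmeas n).lintegral_prod_right'.comp hstep
      _ ≤ ∫⁻ _, C ^ 2 ∂m := lintegral_mono fun i => ih (G i x)
      _ = C ^ 2 := by simp

/- The expected squared increments of the bounded martingale `φ (X_n)` are summable, so the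
increments tend to zero; by conservativity each increment then vanishes. -/
lemma ae_harmonic_comp_eq [SFinite ν]
    (hcons : Conservative (skewProduct G) (ν.prod (iidMeasure m))) :
    ∀ᵐ p ∂ν.prod m, φ (G p.2 p.1) = φ p.1 := by
  have hmeas := measurable_sqIncrement (G := G) hG hφ
  have hiter (n : ℕ) : Measurable fun z => sqIncrement G φ ((skewProduct G)^[n] z) :=
    hmeas.comp ((measurable_skewProduct hG).iterate n)
  have hlim : ∀ᵐ z ∂ν.prod (iidMeasure m),
      Tendsto (fun n => sqIncrement G φ ((skewProduct G)^[n] z)) atTop (𝓝 0) := by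
    refine (Measure.ae_prod_iff_ae_ae (measurableSet_tendsto _ hiter)).2 (.of_forall fun x => ?_)
    have hfiber (n : ℕ) : Measurable fun ω => sqIncrement G φ ((skewProduct G)^[n] (x, ω)) :=
      (hiter n).comp measurable_prodMk_left
    have hsum : ∑' n, ∫⁻ ω, sqIncrement G φ ((skewProduct G)^[n] (x, ω)) ∂iidMeasure m ≤ C ^ 2 :=
      ENNReal.tsum_le_of_sum_range_le fun N =>
        le_self_add.trans (sum_lintegral_sqIncrement_add_le hG hφ hbdd hharm N x)
    rw [← lintegral_tsum fun n => (hfiber n).aemeasurable] at hsum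
    filter_upwards [ae_lt_top (.tsum hfiber) (hsum.trans_lt (by finiteness)).ne] with ω hω
    exact ENNReal.tendsto_atTop_zero_of_tsum_ne_top hω.ne
  have hzero := ae_eq_zero_of_tendsto_comp_iterate hcons hmeas hlim
  have heval := (MeasurePreserving.id ν).prod (measurePreserving_eval_infinitePi (fun _ : ℕ => m) 0)
  have hset : MeasurableSet {p : E × ι | φ (G p.2 p.1) = φ p.1} :=
    measurableSet_eq_fun (hφ.comp hG) (hφ.comp measurable_fst)
  rw [← heval.map_eq, ae_map_iff heval.aemeasurable hset]
  filter_upwards [hzero] with z hz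
  exact sub_eq_zero.1 (enorm_eq_zero.1 (eq_zero_of_pow_eq_zero hz))

end BoundedHarmonic

/-- `ν` is stationary for the random maps `G i`, `i` of law `m`, and it is not a sum of two
nonzero stationary measures of the form `ν.restrict A`, `ν.restrict Aᶜ`. -/
structure IsErgodicStationary (G : ι → E → E) (m : Measure ι) (ν : Measure E) : Prop where
  stepMeasure_eq : stepMeasure G m ν = ν
  measure_eq_zero_or : ∀ A, MeasurableSet A → stepMeasure G m (ν.restrict A) = ν.restrict A →
    ν A = 0 ∨ ν Aᶜ = 0

lemma IsErgodicStationary.exists_ae_eq_const [SFinite m] [SFinite ν]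
    (hν : IsErgodicStationary G m ν)
    (hG : Measurable fun p : E × ι => G p.2 p.1) (hφ : Measurable φ)
    (hinv : ∀ᵐ p ∂ν.prod m, φ (G p.2 p.1) = φ p.1) :
    ∃ c, φ =ᵐ[ν] const E c := by
  refine exists_eventuallyEq_const_of_forall_separating MeasurableSet fun U hU => ?_
  have hinvU : (φ ⁻¹' U) ×ˢ univ =ᵐ[ν.prod m] (fun p : E × ι => G p.2 p.1) ⁻¹' (φ ⁻¹' U) := by
    refine eventuallyEq_set.2 (hinv.mono fun p hp => ?_)
    simp [hp]
  have hrestrict : stepMeasure G m (ν.restrict (φ ⁻¹' U)) = ν.restrict (φ ⁻¹' U) := by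
    conv_rhs => rw [← hν.stepMeasure_eq, stepMeasure, Measure.restrict_map hG (hφ hU)]
    rw [stepMeasure, ← Measure.restrict_congr_set hinvU, ← Measure.prod_restrict,
      Measure.restrict_univ]
  rcases hν.measure_eq_zero_or _ (hφ hU) hrestrict with hU0 | hU0
  · exact .inr (measure_eq_zero_iff_ae_notMem.1 hU0)
  · exact .inl (by simpa using measure_eq_zero_iff_ae_notMem.1 hU0)

end Harmonic

/-! ### Birkhoff sums of a function with negative integral -/

section BirkhoffSum

lemma bddAbove_range_birkhoffSum_comp_iff {α : Type*} (T : α → α) (g : α → ℝ) (z : α) :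
    BddAbove (range fun n => birkhoffSum T g n (T z)) ↔
      BddAbove (range fun n => birkhoffSum T g n z) := by
  constructor
  · rintro ⟨b, hb⟩
    refine ⟨max 0 (g z + b), ?_⟩
    rintro _ ⟨_ | n, rfl⟩
    · simp
    · simp only [birkhoffSum_succ']
      exact le_max_of_le_right (add_le_add_right (hb ⟨n, rfl⟩) (g z))
  · rintro ⟨b, hb⟩
    refine ⟨b - g z, ?_⟩
    rintro _ ⟨n, rfl⟩
    have := hb ⟨n + 1, rfl⟩
    simp only [birkhoffSum_succ'] at this
    linarith

lemma measurable_birkhoffSum {α : Type*} [MeasurableSpace α] {T : α → α} {g : α → ℝ}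
    (hT : Measurable T) (hg : Measurable g) (n : ℕ) : Measurable (birkhoffSum T g n) :=
  Finset.measurable_sum _ fun k _ => hg.comp (hT.iterate k)

lemma setIntegral_not_bddAbove_birkhoffSum_nonneg {α : Type*} [MeasurableSpace α] {μ : Measure α}
    {T : α → α} {g : α → ℝ} (hT : MeasurePreserving T μ μ) (hgm : Measurable g)
    (hg : Integrable g μ) :
    0 ≤ ∫ z in {z | ¬BddAbove (range fun n => birkhoffSum T g n z)}, g z ∂μ := by
  set A : Set α := {z | ¬BddAbove (range fun n => birkhoffSum T g n z)}
  have hA : MeasurableSet A :=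
    (measurableSet_bddAbove_range (measurable_birkhoffSum hT.measurable hgm)).compl
  have hinv : T ⁻¹' A = A := by
    ext z
    exact not_congr (bddAbove_range_birkhoffSum_comp_iff T g z)
  have hTA : MeasurePreserving T (μ.restrict A) (μ.restrict A) := by
    simpa only [hinv] using hT.restrict_preimage hA
  refine integral_nonneg_of_ae_exists_birkhoffSum_pos hTA hgm hg.restrict ?_
  filter_upwards [ae_restrict_mem hA] with z hz
  by_contra! hle
  exact hz ⟨0, forall_mem_range.2 hle⟩

lemma setIntegral_comp_fst {α Ω : Type*} [MeasurableSpace α] [MeasurableSpace Ω] {ν : Measure α}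
    [SFinite ν] {P : Measure Ω} [IsFiniteMeasure P] {A : Set (α × Ω)} {g : α → ℝ}
    (hA : MeasurableSet A) (hg : Integrable g ν) :
    ∫ z in A, g z.1 ∂ν.prod P = ∫ x, P.real (Prod.mk x ⁻¹' A) * g x ∂ν := by
  rw [← integral_indicator hA, integral_prod _ ((hg.comp_fst P).indicator hA)]
  refine integral_congr_ae (.of_forall fun x => ?_)
  calc ∫ ω, A.indicator (fun z => g z.1) (x, ω) ∂P
      = ∫ ω, (Prod.mk x ⁻¹' A).indicator (fun _ => g x) ω ∂P := rfl
    _ = _ := by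
      rw [integral_indicator_const _ (measurable_prodMk_left hA), smul_eq_mul]

variable {E ι : Type*} [MeasurableSpace E] [MeasurableSpace ι] {G : ι → E → E} {m : Measure ι}
  [IsProbabilityMeasure m] {ν : Measure E} {A : Set (E × (ℕ → ι))} {g : E → ℝ}

lemma integral_measureReal_fiber_eq (hG : Measurable fun p : E × ι => G p.2 p.1)
    (hA : MeasurableSet A) (hinv : skewProduct G ⁻¹' A = A) (x : E) :
    ∫ i, (iidMeasure m).real (Prod.mk (G i x) ⁻¹' A) ∂m =
      (iidMeasure m).real (Prod.mk x ⁻¹' A) := by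
  have hfiber (y : E) : ∫⁻ ω, A.indicator 1 (y, ω) ∂iidMeasure m =
      iidMeasure m (Prod.mk y ⁻¹' A) :=
    lintegral_indicator_one (measurable_prodMk_left hA)
  have hmeas : Measurable fun i => iidMeasure m (Prod.mk (G i x) ⁻¹' A) :=
    (measurable_measure_prodMk_left hA).comp (hG.comp measurable_prodMk_left)
  have hstep := lintegral_skewProduct (m := m) hG (measurable_one.indicator hA) x
  simp only [hfiber] at hstep
  have hleft : ∫⁻ ω, A.indicator 1 (skewProduct G (x, ω)) ∂iidMeasure m =
      iidMeasure m (Prod.mk x ⁻¹' A) := by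
    rw [← hfiber]
    conv_rhs => rw [← hinv]
    rfl
  simp only [Measure.real]
  rw [integral_toReal hmeas.aemeasurable (.of_forall fun i => measure_lt_top _ _), ← hstep, hleft]

variable [SFinite ν]

lemma IsErgodicStationary.exists_ae_measureReal_fiber_eq (hν : IsErgodicStationary G m ν)
    (hG : Measurable fun p : E × ι => G p.2 p.1)
    (hcons : Conservative (skewProduct G) (ν.prod (iidMeasure m)))
    (hA : MeasurableSet A) (hinv : skewProduct G ⁻¹' A = A) :
    ∃ c, ∀ᵐ x ∂ν, (iidMeasure m).real (Prod.mk x ⁻¹' A) = c := by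
  have hmeas : Measurable fun x => (iidMeasure m).real (Prod.mk x ⁻¹' A) :=
    (measurable_measure_prodMk_left hA).ennreal_toReal
  have hbdd (x : E) : ‖(iidMeasure m).real (Prod.mk x ⁻¹' A)‖₊ ≤ 1 := by
    rw [← NNReal.coe_le_coe, coe_nnnorm, Real.norm_of_nonneg measureReal_nonneg]
    exact measureReal_le_one
  exact hν.exists_ae_eq_const hG hmeas (ae_harmonic_comp_eq hG hmeas hbdd
    (integral_measureReal_fiber_eq hG hA hinv) hcons)

theorem IsErgodicStationary.ae_bddAbove_birkhoffSum (hν : IsErgodicStationary G m ν)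
    (hG : Measurable fun p : E × ι => G p.2 p.1)
    (hcons : Conservative (skewProduct G) (ν.prod (iidMeasure m)))
    (hgm : Measurable g) (hg : Integrable g ν) (hneg : ∫ x, g x ∂ν < 0) :
    ∀ᵐ z ∂ν.prod (iidMeasure m),
      BddAbove (range fun n => birkhoffSum (skewProduct G) (g ∘ Prod.fst) n z) := by
  let T := skewProduct G
  let f : E × (ℕ → ι) → ℝ := g ∘ Prod.fst
  let A : Set (E × (ℕ → ι)) := {z | ¬BddAbove (range fun n => birkhoffSum T f n z)}
  have hT : Measurable T := measurable_skewProduct hG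
  have hf : Measurable f := hgm.comp measurable_fst
  have hA : MeasurableSet A := (measurableSet_bddAbove_range (measurable_birkhoffSum hT hf)).compl
  have hinv : T ⁻¹' A = A := by
    ext z
    exact not_congr (bddAbove_range_birkhoffSum_comp_iff T f z)
  have hmp := measurePreserving_skewProduct (ν := ν) (m := m) hG
  rw [hν.stepMeasure_eq] at hmp
  obtain ⟨c, hc⟩ := hν.exists_ae_measureReal_fiber_eq hG hcons hA hinv
  have hint : 0 ≤ c * ∫ x, g x ∂ν := by
    calc 0 ≤ ∫ z in A, f z ∂ν.prod (iidMeasure m) :=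
          setIntegral_not_bddAbove_birkhoffSum_nonneg hmp hf (hg.comp_fst _)
      _ = ∫ x, (iidMeasure m).real (Prod.mk x ⁻¹' A) * g x ∂ν := setIntegral_comp_fst hA hg
      _ = ∫ x, c * g x ∂ν := integral_congr_ae (hc.mono fun x hx => congrArg (· * g x) hx)
      _ = c * ∫ x, g x ∂ν := integral_const_mul c g
  have hc0 : c ≤ 0 := by_contra fun hpos => hint.not_gt (mul_neg_of_pos_of_neg (not_le.1 hpos) hneg)
  refine measure_eq_zero_iff_ae_notMem.1 ((Measure.measure_prod_null hA).2 ?_) |>.mono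
    fun z hz => not_not.1 hz
  filter_upwards [hc] with x hx
  exact (measureReal_eq_zero_iff).1 ((hx.trans_le hc0).antisymm measureReal_nonneg)

end BirkhoffSum

/-! ### Comparison of two stationary measures on the line -/

section Line

lemma not_bddAbove_sum_of_frequently_le {d : ℕ → ℝ} {ε : ℝ} (hε : 0 < ε)
    (hnonneg : ∀ᶠ n in atTop, 0 ≤ d n) (hfreq : ∃ᶠ n in atTop, ε ≤ d n) :
    ¬ BddAbove (range fun n => ∑ k ∈ Finset.range n, d k) := by
  rintro ⟨B, hB⟩
  obtain ⟨N, hN⟩ := eventually_atTop.1 hnonneg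
  have hsummable : Summable fun n => d (N + n) := by
    refine summable_of_sum_range_le (c := B - ∑ k ∈ Finset.range N, d k)
      (fun n => hN _ (Nat.le_add_right N n)) fun n => ?_
    rw [le_sub_iff_add_le', ← Finset.sum_range_add]
    exact hB ⟨N + n, rfl⟩
  have hlim : Tendsto d atTop (𝓝 0) :=
    (tendsto_add_atTop_iff_nat N).1 (by simpa only [add_comm N] using hsummable.tendsto_atTop_zero)
  obtain ⟨n, hle, hlt⟩ := (hfreq.and_eventually (hlim.eventually_lt_const hε)).exists
  exact hle.not_gt hlt

lemma not_bddAbove_sum_of_bddAbove_sum {X Y : ℕ → ℝ} {u v v' t c c' : ℝ} (hXY : ∀ n, X n ≤ Y n)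
    (hu : ∀ᶠ n in atTop, (u < X n ↔ u < Y n)) (hv : ∀ᶠ n in atTop, (v < X n ↔ v < Y n))
    (hv' : ∀ᶠ n in atTop, (v' < X n ↔ v' < Y n)) (hrec : ∃ᶠ n in atTop, X n ∈ Ioc v v')
    (hcc' : c < c')
    (hX : BddAbove (range fun n => ∑ k ∈ Finset.range n,
      ((Ioc u t).indicator 1 (X k) - c * (Ioc v v').indicator 1 (X k)))) :
    ¬ BddAbove (range fun n => ∑ k ∈ Finset.range n,
      (c' * (Ioc v v').indicator 1 (Y k) - (Ioc u t).indicator 1 (Y k))) := by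
  rintro ⟨B', hB'⟩
  obtain ⟨B, hB⟩ := hX
  have hind (s : Set ℝ) : 0 ≤ s.indicator (1 : ℝ → ℝ) := indicator_nonneg fun _ _ => zero_le_one
  have hnum : ∀ᶠ n in atTop,
      (Ioc u t).indicator (1 : ℝ → ℝ) (Y n) ≤ (Ioc u t).indicator 1 (X n) := by
    filter_upwards [hu] with n hn
    by_cases hY : Y n ∈ Ioc u t
    · have hX : X n ∈ Ioc u t := ⟨hn.2 hY.1, (hXY n).trans hY.2⟩
      simp [hX, hY]
    · rw [indicator_of_notMem hY]
      exact hind _ (X n)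
  have hden : ∀ᶠ n in atTop,
      (Ioc v v').indicator (1 : ℝ → ℝ) (Y n) = (Ioc v v').indicator 1 (X n) := by
    filter_upwards [hv, hv'] with n hn hn'
    simp only [indicator, mem_Ioc, ← not_lt, hn, hn', Pi.one_apply]
  let d (n : ℕ) : ℝ := ((Ioc u t).indicator 1 (X n) - c * (Ioc v v').indicator 1 (X n)) +
    (c' * (Ioc v v').indicator 1 (Y n) - (Ioc u t).indicator 1 (Y n))
  have hle : ∀ᶠ n in atTop, (c' - c) * (Ioc v v').indicator 1 (X n) ≤ d n := by
    filter_upwards [hnum, hden] with n hn hn'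
    dsimp only [d]
    rw [hn']
    linarith
  refine not_bddAbove_sum_of_frequently_le (d := d) (sub_pos.2 hcc') (hle.mono fun n hn => ?_)
    ((hrec.and_eventually hle).mono fun n hn => ?_) ⟨B + B', ?_⟩
  · exact (mul_nonneg (sub_pos.2 hcc').le (hind _ _)).trans hn
  · simpa only [indicator_of_mem hn.1, Pi.one_apply, mul_one] using hn.2
  · rintro _ ⟨n, rfl⟩
    dsimp only [d]
    rw [Finset.sum_add_distrib]
    exact add_le_add (hB ⟨n, rfl⟩) (hB' ⟨n, rfl⟩)

lemma IsOPH.continuous {g : ℝ → ℝ} (hg : IsOPH g) : Continuous g :=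
  hg.1.monotone.continuous_of_surjective hg.2

variable {ι : Type*} {G : ι → ℝ → ℝ} {ω : ℕ → ι} {u v v' x y a b j₁ j₂ : ℝ}

lemma skewProduct_iterate (G : ι → ℝ → ℝ) (ω : ℕ → ι) (x : ℝ) (n : ℕ) :
    (skewProduct G)^[n] (x, ω) = (chain G ω x n, fun k => ω (k + n)) := by
  induction n with
  | zero => rfl
  | succ n ih =>
    rw [iterate_succ_apply', ih]
    simp only [skewProduct, chain, zero_add, add_assoc, add_comm 1 n]

lemma birkhoffSum_skewProduct (G : ι → ℝ → ℝ) (g : ℝ → ℝ) (n : ℕ) (x : ℝ) (ω : ℕ → ι) :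
    birkhoffSum (skewProduct G) (g ∘ Prod.fst) n (x, ω) =
      ∑ k ∈ Finset.range n, g (chain G ω x k) := by
  simp only [birkhoffSum, skewProduct_iterate, comp_apply]

lemma invIter_succ (G : ι → ℝ → ℝ) (ω : ℕ → ι) (u : ℝ) (n : ℕ) :
    invIter G ω u (n + 1) = invIter G ω (invFun (G (ω n)) u) n := by
  simp [invIter, List.range_succ]

section Homeomorphism

variable (hG : ∀ i, IsOPH (G i))
include hG

lemma strictMono_chain (ω : ℕ → ι) (n : ℕ) : StrictMono fun x => chain G ω x n := by
  induction n with
  | zero => exact strictMono_id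
  | succ n ih => exact (hG (ω n)).1.comp ih

lemma chain_invIter (ω : ℕ → ι) (u : ℝ) (n : ℕ) : chain G ω (invIter G ω u n) n = u := by
  induction n generalizing u with
  | zero => rfl
  | succ n ih =>
    rw [invIter_succ, chain, ih]
    exact rightInverse_invFun (hG _).2 u

lemma eventually_lt_chain_iff (hx : j₁ < x) (hy : y < j₂) (hxy : x < y)
    (hfin : {n | invIter G ω u n ∈ Ioo j₁ j₂}.Finite) :
    ∀ᶠ n in atTop, (u < chain G ω x n ↔ u < chain G ω y n) := by
  have hout : ∀ᶠ n in atTop, invIter G ω u n ∉ Ioo j₁ j₂ := by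
    rw [← Nat.cofinite_eq_atTop]
    exact hfin.eventually_cofinite_notMem
  filter_upwards [hout] with n hn
  have hmono := strictMono_chain hG ω n
  refine ⟨fun h => h.trans (hmono hxy), fun hlt => ?_⟩
  by_contra! hle
  rw [← chain_invIter hG ω u n] at hlt hle
  exact hn ⟨hx.trans_le (hmono.le_iff_le.1 hle), (hmono.lt_iff_lt.1 hlt).trans hy⟩

end Homeomorphism

section Measure

variable {ν ν₁ ν₂ : Measure ℝ} [IsLocallyFiniteMeasure ν] [IsLocallyFiniteMeasure ν₁]
  [IsLocallyFiniteMeasure ν₂]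

lemma integrable_indicator_Ioc_one (ν : Measure ℝ) [IsLocallyFiniteMeasure ν] (p q : ℝ) :
    Integrable ((Ioc p q).indicator (1 : ℝ → ℝ)) ν :=
  (integrable_indicator_iff measurableSet_Ioc).2 (integrableOn_const measure_Ioc_lt_top.ne)

lemma measurable_indicator_Ioc_one (p q : ℝ) : Measurable ((Ioc p q).indicator (1 : ℝ → ℝ)) :=
  measurable_one.indicator measurableSet_Ioc

lemma eq_smul_of_forall_mem_measureReal_Ioc_eq {M : Set ℝ} (hM : ¬ BddBelow M) {C : ℝ≥0}
    (h : ∀ u ∈ M, ∀ t, ν₁.real (Ioc u t) = C * ν₂.real (Ioc u t)) : ν₁ = C • ν₂ := by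
  have hmeas (u) (hu : u ∈ M) (t : ℝ) : ν₁ (Ioc u t) = C * ν₂ (Ioc u t) := by
    rw [← ofReal_measureReal measure_Ioc_lt_top.ne, h u hu t, ENNReal.ofReal_mul C.coe_nonneg,
      ofReal_measureReal measure_Ioc_lt_top.ne, ENNReal.ofReal_coe_nnreal]
  refine Measure.ext_of_Ioc _ _ fun x y hxy => ?_
  obtain ⟨u, hu, hux⟩ := not_bddBelow_iff.1 hM x
  have hdiff : Ioc x y = Ioc u y \ Ioc u x := by
    ext z
    simp only [mem_Ioc, Set.mem_sdiff, not_and, not_le]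
    exact ⟨fun hz => ⟨⟨hux.trans hz.1, hz.2⟩, fun _ => hz.1⟩, fun hz => ⟨hz.2 hz.1.1, hz.1.2⟩⟩
  have hsub : Ioc u x ⊆ Ioc u y := Ioc_subset_Ioc_right hxy.le
  rw [hdiff, Measure.smul_apply, ENNReal.smul_def, smul_eq_mul,
    measure_sdiff hsub measurableSet_Ioc.nullMeasurableSet measure_Ioc_lt_top.ne,
    measure_sdiff hsub measurableSet_Ioc.nullMeasurableSet measure_Ioc_lt_top.ne,
    hmeas u hu, hmeas u hu, ENNReal.mul_sub fun _ _ => ENNReal.coe_ne_top]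

variable [MeasurableSpace ι] {m : Measure ι} [IsProbabilityMeasure m]
  (hmeas : Measurable fun p : ℝ × ι => G p.2 p.1)
  (hrec : ∀ x, ∀ᵐ ω ∂iidMeasure m, ∃ᶠ n in atTop, chain G ω x n ∈ Icc a b)
include hmeas hrec

lemma IsErgodicStationary.exists_mem_ae_bddAbove_sum (hν : IsErgodicStationary G m ν) {g : ℝ → ℝ}
    (hgm : Measurable g) (hg : Integrable g ν) (hneg : ∫ x, g x ∂ν < 0) {U : Set ℝ}
    (hU : ν U ≠ 0) :
    ∃ x ∈ U, ∀ᵐ ω ∂iidMeasure m,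
      BddAbove (range fun n => ∑ k ∈ Finset.range n, g (chain G ω x k)) := by
  have hcons : Conservative (skewProduct G) (ν.prod (iidMeasure m)) :=
    conservative_skewProduct hmeas measurableSet_Icc (K := Icc a b)
      (by simpa only [skewProduct_iterate] using hrec) hν.stepMeasure_eq
      isCompact_Icc.measure_lt_top.ne
  have hae := Measure.ae_ae_of_ae_prod (hν.ae_bddAbove_birkhoffSum hmeas hcons hgm hg hneg)
  simp only [birkhoffSum_skewProduct] at hae
  by_contra hbad
  exact hU (measure_mono_null (fun x hx hgood => hbad ⟨x, hx, hgood⟩) hae)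

variable (hG : ∀ i, IsOPH (G i)) {M : Set ℝ}
  (htrans : ∀ u ∈ M, ∀ᵐ ω ∂iidMeasure m, {n | invIter G ω u n ∈ Ioo j₁ j₂}.Finite)
include hG htrans

-- Two trajectories started in `J` are eventually on the same side of every point of `M`, so the
-- upper one visits `Ioc u t` at most as often as the lower one, and `Ioc v v'` equally often.
lemma IsErgodicStationary.measureReal_div_le (hν₁ : IsErgodicStationary G m ν₁)
    (hν₂ : IsErgodicStationary G m ν₂) {q : ℝ} (hU₁ : ν₁ (Ioo j₁ q) ≠ 0)
    (hU₂ : ν₂ (Ioo q j₂) ≠ 0) (hu : u ∈ M) (hv : v ∈ M) (hv' : v' ∈ M) (t : ℝ)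
    (hab : Icc a b ⊆ Ioc v v') (h₁ : 0 < ν₁.real (Ioc v v')) (h₂ : 0 < ν₂.real (Ioc v v')) :
    ν₂.real (Ioc u t) / ν₂.real (Ioc v v') ≤ ν₁.real (Ioc u t) / ν₁.real (Ioc v v') := by
  by_contra! hlt
  obtain ⟨c, hc, hc₂⟩ := exists_between hlt
  obtain ⟨c', hcc', hc'⟩ := exists_between hc₂
  rw [div_lt_iff₀ h₁] at hc
  rw [lt_div_iff₀ h₂] at hc'
  have hm := measurable_indicator_Ioc_one
  have hi₁ := integrable_indicator_Ioc_one ν₁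
  have hi₂ := integrable_indicator_Ioc_one ν₂
  obtain ⟨x, hx, hbddx⟩ := hν₁.exists_mem_ae_bddAbove_sum hmeas hrec
    (g := fun z => (Ioc u t).indicator 1 z - c * (Ioc v v').indicator 1 z)
    ((hm u t).sub ((hm v v').const_mul c)) ((hi₁ u t).sub ((hi₁ v v').const_mul c))
    (by
      rw [integral_sub (hi₁ u t) ((hi₁ v v').const_mul c), integral_const_mul,
        integral_indicator_one measurableSet_Ioc, integral_indicator_one measurableSet_Ioc]
      exact sub_neg.2 hc) hU₁
  obtain ⟨y, hy, hbddy⟩ := hν₂.exists_mem_ae_bddAbove_sum hmeas hrec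
    (g := fun z => c' * (Ioc v v').indicator 1 z - (Ioc u t).indicator 1 z)
    (((hm v v').const_mul c').sub (hm u t)) (((hi₂ v v').const_mul c').sub (hi₂ u t))
    (by
      rw [integral_sub ((hi₂ v v').const_mul c') (hi₂ u t), integral_const_mul,
        integral_indicator_one measurableSet_Ioc, integral_indicator_one measurableSet_Ioc]
      exact sub_neg.2 hc') hU₂
  have hxy : x < y := hx.2.trans hy.1
  obtain ⟨ω, hbx, hby, hvisit, hωu, hωv, hωv'⟩ := (hbddx.and <| hbddy.and <| (hrec x).and <|
    (htrans u hu).and <| (htrans v hv).and (htrans v' hv')).exists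
  have hside {w : ℝ} := eventually_lt_chain_iff (u := w) (ω := ω) hG hx.1 hy.2 hxy
  exact not_bddAbove_sum_of_bddAbove_sum (fun n => (strictMono_chain hG ω n hxy).le) (hside hωu)
    (hside hωv) (hside hωv') (hvisit.mono fun n hn => hab hn) hcc' hbx hby

theorem IsErgodicStationary.exists_eq_smul (hν₁ : IsErgodicStationary G m ν₁)
    (hν₂ : IsErgodicStationary G m ν₂) (hMa : ¬ BddAbove M) (hMb : ¬ BddBelow M) {q : ℝ}
    (hL₁ : ν₁ (Ioo j₁ q) ≠ 0) (hL₂ : ν₂ (Ioo j₁ q) ≠ 0)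
    (hR₁ : ν₁ (Ioo q j₂) ≠ 0) (hR₂ : ν₂ (Ioo q j₂) ≠ 0) :
    ∃ C : ℝ≥0, 0 < C ∧ ν₁ = C • ν₂ := by
  obtain ⟨v, hv, hvlt⟩ := not_bddBelow_iff.1 hMb (min a j₁)
  obtain ⟨v', hv', hltv'⟩ := not_bddAbove_iff.1 hMa (max b j₂)
  rw [lt_min_iff] at hvlt
  rw [max_lt_iff] at hltv'
  have hab : Icc a b ⊆ Ioc v v' := fun z hz =>
    ⟨hvlt.1.trans_le hz.1, hz.2.trans hltv'.1.le⟩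
  have hqj : q < j₂ := nonempty_Ioo.1 (nonempty_of_measure_ne_zero hR₁)
  have hJ : Ioo j₁ q ⊆ Ioc v v' := fun z hz =>
    ⟨hvlt.2.trans hz.1, (hz.2.trans (hqj.trans hltv'.2)).le⟩
  have hpos₁ : 0 < ν₁.real (Ioc v v') :=
    ENNReal.toReal_pos (fun h => hL₁ (measure_mono_null hJ h)) measure_Ioc_lt_top.ne
  have hpos₂ : 0 < ν₂.real (Ioc v v') :=
    ENNReal.toReal_pos (fun h => hL₂ (measure_mono_null hJ h)) measure_Ioc_lt_top.ne
  have hC := div_pos hpos₁ hpos₂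
  refine ⟨_, Real.toNNReal_pos.2 hC, eq_smul_of_forall_mem_measureReal_Ioc_eq hMb fun u hu t => ?_⟩
  have heq := le_antisymm
    (hν₁.measureReal_div_le hmeas hrec hG htrans hν₂ hL₁ hR₂ hu hv hv' t hab hpos₁ hpos₂)
    (hν₂.measureReal_div_le hmeas hrec hG htrans hν₁ hL₂ hR₁ hu hv hv' t hab hpos₂ hpos₁)
  rw [Real.coe_toNNReal _ hC.le]
  field_simp at heq ⊢
  linarith

end Measure

end Line

lemma exists_measure_Ioo_ne_zero {ν₁ ν₂ : Measure ℝ} {j₁ j₂ : ℝ}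
    (hsupp : msupp ν₁ ⊆ msupp ν₂) (hJ : (Ioo j₁ j₂ ∩ msupp ν₁).Nontrivial) :
    ∃ q, (ν₁ (Ioo j₁ q) ≠ 0 ∧ ν₁ (Ioo q j₂) ≠ 0) ∧ ν₂ (Ioo j₁ q) ≠ 0 ∧ ν₂ (Ioo q j₂) ≠ 0 := by
  obtain ⟨y, ⟨hyJ, hy⟩, y', ⟨hyJ', hy'⟩, hlt⟩ := hJ.exists_lt
  obtain ⟨q, hyq, hqy'⟩ := exists_between hlt
  have hne {ν : Measure ℝ} (hν : msupp ν₁ ⊆ msupp ν) :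
      ν (Ioo j₁ q) ≠ 0 ∧ ν (Ioo q j₂) ≠ 0 :=
    ⟨(hν hy _ isOpen_Ioo ⟨hyJ.1, hyq⟩).ne', (hν hy' _ isOpen_Ioo ⟨hqy', hyJ'.2⟩).ne'⟩
  exact ⟨q, hne Subset.rfl, hne hsupp⟩

/-! ### Invariance on test functions and stationarity -/

section Stationarity

lemma exists_hasCompactSupport_integral_pos {X : Type*} [TopologicalSpace X] [T2Space X]
    [LocallyCompactSpace X] [SigmaCompactSpace X] [MeasurableSpace X] [OpensMeasurableSpace X]
    {ν : Measure X} [IsFiniteMeasureOnCompacts ν] (hν : ν ≠ 0) {K : Set X} (hK : IsCompact K) :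
    ∃ f : C(X, ℝ), HasCompactSupport f ∧ (∀ x, 0 ≤ f x) ∧ EqOn f 1 K ∧ 0 < ∫ x, f x ∂ν := by
  obtain ⟨n, hn⟩ : ∃ n, ν (compactCovering X n) ≠ 0 := by
    by_contra! h
    exact hν (Measure.measure_univ_eq_zero.1 (iUnion_compactCovering X ▸ measure_iUnion_null h))
  obtain ⟨f, hf_one, -, hf_supp, hf_mem⟩ := exists_continuous_one_zero_of_isCompact
    (hK.union (isCompact_compactCovering X n)) isClosed_empty (disjoint_empty _)
  refine ⟨f, hf_supp, fun x => (hf_mem x).1, hf_one.mono subset_union_left, ?_⟩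
  rw [integral_pos_iff_support_of_nonneg (fun x => (hf_mem x).1)
    (f.continuous.integrable_of_hasCompactSupport hf_supp)]
  have hsub : compactCovering X n ⊆ support f := fun x hx => by
    simp [mem_support, hf_one (subset_union_right hx)]
  exact (pos_iff_ne_zero.2 hn).trans_le (measure_mono hsub)

/-- The one-step image `∑ᵢ m{i} • (G i)_* ν` of `ν` under the atoms of `m`. In contrast to
`stepMeasure` it involves no measurability in `i`; the two agree when `ι` is countable and
discrete. -/
noncomputable def atomicStepMeasure {E ι : Type*} [MeasurableSpace E] [MeasurableSpace ι]
    (G : ι → E → E) (m : Measure ι) (ν : Measure E) : Measure E :=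
  Measure.sum fun i => m {i} • ν.map (G i)

section General

variable {E ι : Type*} [MeasurableSpace E] [MeasurableSpace ι] {G : ι → E → E} {m : Measure ι}
  {ν : Measure E}

lemma lintegral_atomicStepMeasure (hG : ∀ i, Measurable (G i)) {F : E → ℝ≥0∞}
    (hF : Measurable F) :
    ∫⁻ x, F x ∂atomicStepMeasure G m ν = ∑' i, m {i} * ∫⁻ x, F (G i x) ∂ν := by
  simp only [atomicStepMeasure, lintegral_sum_measure, lintegral_smul_measure,
    lintegral_map hF (hG _), smul_eq_mul]

lemma integral_atomicStepMeasure (hG : ∀ i, Measurable (G i)) {f : E → ℝ}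
    (hfm : StronglyMeasurable f) (hf : Integrable f (atomicStepMeasure G m ν)) :
    ∫ x, f x ∂atomicStepMeasure G m ν = ∑' i, (m {i}).toReal * ∫ x, f (G i x) ∂ν := by
  simp only [atomicStepMeasure, ← (hasSum_integral_measure hf).tsum_eq, integral_smul_measure,
    integral_map (hG _).aemeasurable hfm.aestronglyMeasurable, smul_eq_mul]

lemma stepMeasure_eq_atomicStepMeasure [Countable ι] [MeasurableSingletonClass ι] [SFinite m]
    [SFinite ν] (hG : ∀ i, Measurable (G i)) :
    stepMeasure G m ν = atomicStepMeasure G m ν := by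
  have hmeas : Measurable fun p : E × ι => G p.2 p.1 := measurable_from_prod_countable_left hG
  ext s hs
  rw [stepMeasure, Measure.map_apply hmeas hs, Measure.prod_apply_symm (hmeas hs),
    lintegral_countable', ← lintegral_indicator_one hs,
    lintegral_atomicStepMeasure hG (measurable_one.indicator hs)]
  refine tsum_congr fun i => ?_
  rw [mul_comm, ← lintegral_indicator_one (measurable_prodMk_right (hmeas hs))]
  rfl

end General

variable {ι : Type*} [MeasurableSpace ι] {G : ι → ℝ → ℝ} {m : Measure ι} {ν : Measure ℝ}

lemma isInv_of_atomicStepMeasure_eq [IsFiniteMeasureOnCompacts ν] (hG : ∀ i, Measurable (G i))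
    (h : atomicStepMeasure G m ν = ν) : IsInv G m ν := by
  intro f hf hsupp
  have hint : Integrable f (atomicStepMeasure G m ν) :=
    h.symm ▸ hf.integrable_of_hasCompactSupport hsupp
  rw [← integral_atomicStepMeasure hG hf.stronglyMeasurable hint, h]

section Homeomorphism

variable [IsFiniteMeasureOnCompacts ν] (hG : ∀ i, IsOPH (G i))
include hG

lemma IsInv.lintegral_atomicStepMeasure_lt_top [IsFiniteMeasure m] (hν : IsInv G m ν) {f : C(ℝ, ℝ)}
    (hsupp : HasCompactSupport f) (hnonneg : ∀ x, 0 ≤ f x) (hpos : 0 < ∫ x, f x ∂ν) :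
    ∫⁻ x, ENNReal.ofReal (f x) ∂atomicStepMeasure G m ν < ∞ := by
  have hterm (i : ι) : m {i} * ∫⁻ x, ENNReal.ofReal (f (G i x)) ∂ν =
      ENNReal.ofReal ((m {i}).toReal * ∫ x, f (G i x) ∂ν) := by
    have hint : Integrable (fun x => f (G i x)) ν :=
      (f.continuous.comp (hG i).continuous).integrable_of_hasCompactSupport
        (hsupp.comp_homeomorph ((hG i).1.orderIsoOfSurjective _ (hG i).2).toHomeomorph)
    rw [ENNReal.ofReal_mul ENNReal.toReal_nonneg, ENNReal.ofReal_toReal (measure_ne_top _ _),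
      ofReal_integral_eq_lintegral_ofReal hint (.of_forall fun x => hnonneg _)]
  have hsum : Summable fun i => (m {i}).toReal * ∫ x, f (G i x) ∂ν := by
    by_contra h
    have hzero := hν f f.continuous hsupp
    rw [tsum_eq_zero_of_not_summable h] at hzero
    exact hpos.ne' hzero
  rw [lintegral_atomicStepMeasure (fun i => (hG i).continuous.measurable)
    f.continuous.measurable.ennreal_ofReal, tsum_congr hterm, ← ENNReal.ofReal_tsum_of_nonneg
    (fun i => mul_nonneg ENNReal.toReal_nonneg (integral_nonneg fun x => hnonneg _)) hsum]
  exact ENNReal.ofReal_lt_top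

lemma IsInv.isFiniteMeasureOnCompacts_atomicStepMeasure [IsFiniteMeasure m] (hν : IsInv G m ν)
    (h0 : ν ≠ 0) : IsFiniteMeasureOnCompacts (atomicStepMeasure G m ν) where
  lt_top_of_isCompact K hK := by
    obtain ⟨f, hsupp, hnonneg, hone, hpos⟩ := exists_hasCompactSupport_integral_pos h0 hK
    refine lt_of_le_of_lt ?_ (hν.lintegral_atomicStepMeasure_lt_top hG hsupp hnonneg hpos)
    rw [← lintegral_indicator_one hK.measurableSet]
    refine lintegral_mono (indicator_le fun x hx => ?_)
    simp [hone hx]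

theorem IsInv.atomicStepMeasure_eq [IsFiniteMeasure m] (hν : IsInv G m ν) (h0 : ν ≠ 0) :
    atomicStepMeasure G m ν = ν := by
  have := hν.isFiniteMeasureOnCompacts_atomicStepMeasure hG h0
  have : IsLocallyFiniteMeasure (atomicStepMeasure G m ν) :=
    isLocallyFiniteMeasure_of_isFiniteMeasureOnCompacts
  have : IsLocallyFiniteMeasure ν := isLocallyFiniteMeasure_of_isFiniteMeasureOnCompacts
  refine Measure.ext_of_integral_eq_on_compactlySupported fun f => ?_
  have hf : Continuous f := f.continuous
  rw [integral_atomicStepMeasure (fun i => (hG i).continuous.measurable) hf.stronglyMeasurable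
    (hf.integrable_of_hasCompactSupport f.hasCompactSupport)]
  exact (hν f hf f.hasCompactSupport).symm

theorem IsErg.isErgodicStationary [Countable ι] [MeasurableSingletonClass ι] [IsFiniteMeasure m]
    (hν : IsErg G m ν) (h0 : ν ≠ 0) : IsErgodicStationary G m ν := by
  have hmeas (i : ι) : Measurable (G i) := (hG i).continuous.measurable
  have : IsLocallyFiniteMeasure ν := isLocallyFiniteMeasure_of_isFiniteMeasureOnCompacts
  refine ⟨?_, fun A hA hrestrict => hν.2 A hA ?_⟩
  · rw [stepMeasure_eq_atomicStepMeasure hmeas, hν.1.atomicStepMeasure_eq hG h0]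
  · rw [stepMeasure_eq_atomicStepMeasure hmeas] at hrestrict
    exact isInv_of_atomicStepMeasure_eq hmeas hrestrict

end Homeomorphism

end Stationarity

/-! ### Atoms of a countable measurable space -/

section Atoms

lemma mem_measurableAtom_pi {κ : Type*} {α : κ → Type*} [∀ k, MeasurableSpace (α k)]
    {ω ω' : ∀ k, α k} (h : ∀ k, ω' k ∈ measurableAtom (ω k)) : ω' ∈ measurableAtom ω := by
  -- Exactly the sets not separating `ω` from `ω'` have a measurable preimage under this map.
  let pick (b : Bool) : ∀ k, α k := b.rec ω ω'
  have hpick : Measurable[⊥] pick := by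
    refine @measurable_pi_lambda _ _ _ ⊥ _ _ fun k A hA => ?_
    rw [MeasurableSpace.measurableSet_bot_iff]
    by_cases hω : ω k ∈ A
    · exact .inr (eq_univ_of_forall (Bool.rec hω (mem_of_mem_measurableAtom (h k) hA hω)))
    · exact .inl (eq_empty_of_forall_notMem
        (Bool.rec hω (mem_of_mem_measurableAtom (h k) hA.compl hω)))
  simp only [measurableAtom, mem_iInter]
  intro A hω hA
  rcases MeasurableSpace.measurableSet_bot_iff.1 (hpick hA) with hempty | huniv
  · exact absurd (show false ∈ pick ⁻¹' A from hω) (hempty ▸ notMem_empty _)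
  · exact show true ∈ pick ⁻¹' A from huniv ▸ mem_univ true

lemma measurableAtom_pi {κ : Type*} {α : κ → Type*} [∀ k, MeasurableSpace (α k)] [Countable κ]
    [∀ k, Countable (α k)] (ω : ∀ k, α k) :
    measurableAtom ω = univ.pi fun k => measurableAtom (ω k) :=
  (measurableAtom_subset (.univ_pi fun k => .measurableAtom_of_countable (ω k))
    fun k _ => mem_measurableAtom_self (ω k)).antisymm
    fun _ hω' => mem_measurableAtom_pi fun k => hω' k (mem_univ k)

variable {α : Type*} [MeasurableSpace α] {μ μ' : Measure α} {x y : α}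

lemma mem_measurableAtom_comm : x ∈ measurableAtom y ↔ y ∈ measurableAtom x :=
  ⟨fun h => measurableAtom_eq_of_mem h ▸ mem_measurableAtom_self y,
    fun h => measurableAtom_eq_of_mem h ▸ mem_measurableAtom_self x⟩

lemma measure_le_of_forall_exists_mem_measurableAtom {S T : Set α}
    (h : ∀ x ∈ S, ∃ y ∈ T, x ∈ measurableAtom y) : μ S ≤ μ T := by
  rw [← measure_toMeasurable T]
  refine measure_mono fun x hx => ?_
  obtain ⟨y, hy, hxy⟩ := h x hx
  exact mem_of_mem_measurableAtom hxy (measurableSet_toMeasurable μ T) (subset_toMeasurable μ T hy)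

lemma measure_measurableAtom (x : α) : μ (measurableAtom x) = μ {x} :=
  (measure_le_of_forall_exists_mem_measurableAtom fun _ hy =>
    ⟨x, mem_singleton x, hy⟩).antisymm
    (measure_mono (singleton_subset_iff.2 (mem_measurableAtom_self x)))

lemma measure_ext_of_measurableAtom [Countable α]
    (h : ∀ x, μ (measurableAtom x) = μ' (measurableAtom x)) : μ = μ' := by
  refine Measure.ext_of_iUnion_eq_univ
    (iUnion_eq_univ_iff.2 fun x => ⟨x, mem_measurableAtom_self x⟩) fun x => ?_
  ext S hS
  rw [Measure.restrict_apply hS, Measure.restrict_apply hS]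
  by_cases hx : x ∈ S
  · rw [inter_eq_right.2 (measurableAtom_subset hS hx), h]
  · have hempty : S ∩ measurableAtom x = ∅ :=
      (disjoint_compl_right.mono_right (measurableAtom_subset hS.compl hx)).inter_eq
    simp only [hempty, measure_empty]

/-- A representative of the atom of `x`, the same one for all points of the atom. -/
noncomputable def atomRep (x : α) : α :=
  Set.Nonempty.some (s := measurableAtom x) ⟨x, mem_measurableAtom_self x⟩

lemma atomRep_mem_measurableAtom (x : α) : atomRep x ∈ measurableAtom x :=
  Set.Nonempty.some_mem _

lemma mem_measurableAtom_atomRep (x : α) : x ∈ measurableAtom (atomRep x) :=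
  mem_measurableAtom_comm.1 (atomRep_mem_measurableAtom x)

lemma atomRep_eq_of_mem (h : x ∈ measurableAtom y) : atomRep x = atomRep y := by
  simp only [atomRep, measurableAtom_eq_of_mem h]

lemma measurableSet_atomRep_preimage [Countable α] (S : Set α) :
    MeasurableSet (atomRep ⁻¹' S) := by
  have hunion : atomRep ⁻¹' S = ⋃ x ∈ atomRep ⁻¹' S, measurableAtom x := by
    refine Subset.antisymm (fun x hx => mem_biUnion hx (mem_measurableAtom_self x))
      (iUnion₂_subset fun x hx y hy => ?_)
    rwa [mem_preimage, atomRep_eq_of_mem hy]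
  rw [hunion]
  exact .biUnion (to_countable _) fun x _ => .measurableAtom_of_countable x

lemma lintegral_comp_atomRep [Countable α] (F : α → ℝ≥0∞) :
    ∫⁻ x, F (atomRep x) ∂μ = ∑' y, F y * μ (atomRep ⁻¹' {y}) := by
  have hfiber (x : α) : F (atomRep x) = ∑' y, (atomRep ⁻¹' {y}).indicator (fun _ => F y) x := by
    rw [tsum_eq_single (atomRep x) fun y hy => indicator_of_notMem (by simpa using hy.symm) _]
    simp
  simp only [hfiber]
  rw [lintegral_tsum fun y =>
    (measurable_const.indicator (measurableSet_atomRep_preimage {y})).aemeasurable]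
  exact tsum_congr fun y => lintegral_indicator_const (measurableSet_atomRep_preimage {y}) _

lemma measurableSingletonClass_of_atomRep [Countable α] (h : ∀ x : α, atomRep x = x) :
    MeasurableSingletonClass α where
  measurableSet_singleton x := by
    have hatom : measurableAtom x = {x} := eq_singleton_iff_unique_mem.2
      ⟨mem_measurableAtom_self x, fun y hy => by rw [← h y, atomRep_eq_of_mem hy, h x]⟩
    exact hatom ▸ .measurableAtom_of_countable x

end Atoms

/-! ### Discreteness of the index space -/

section Discreteness

variable {ι : Type*} [MeasurableSpace ι] {m : Measure ι}

lemma IsProd.measure_atom_cylinder {Q : Measure (ℕ → ι)} (hQ : IsProd m Q) (n : ℕ) (c : ℕ → ι) :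
    Q {ω | ∀ k < n, ω k ∈ measurableAtom (c k)} = ∏ k ∈ Finset.range n, m {c k} := by
  refine (le_antisymm (measure_le_of_forall_exists_mem_measurableAtom fun ω hω => ?_)
    (measure_mono fun ω hω k hk => ?_)).trans (hQ n c)
  · refine ⟨fun k => if k < n then c k else ω k, fun k hk => if_pos hk,
      mem_measurableAtom_pi fun k => ?_⟩
    split_ifs with hk
    exacts [hω k hk, mem_measurableAtom_self _]
  · exact hω k hk ▸ mem_measurableAtom_self _

lemma ae_frequently_skewProduct_comp_atomRep_mem {E : Type*} {G : ι → E → E} {K : Set E} {x : E}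
    (hrec : ∀ᵐ ω ∂iidMeasure m, ∃ᶠ n in atTop, ((skewProduct G)^[n] (x, ω)).1 ∈ K) :
    ∀ᵐ ω ∂iidMeasure m,
      ∃ᶠ n in atTop, ((skewProduct fun i => G (atomRep i))^[n] (x, ω)).1 ∈ K := by
  have hsemiconj : Semiconj (fun z : E × (ℕ → ι) => (z.1, atomRep ∘ z.2))
      (skewProduct fun i => G (atomRep i)) (skewProduct G) := fun _ => rfl
  have hfst (ω : ℕ → ι) (n : ℕ) : ((skewProduct fun i => G (atomRep i))^[n] (x, ω)).1 =
      ((skewProduct G)^[n] (x, atomRep ∘ ω)).1 :=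
    (Prod.ext_iff.1 (hsemiconj.iterate_right n (x, ω))).1
  simp only [hfst]
  exact le_antisymm ((measure_le_of_forall_exists_mem_measurableAtom fun ω hω =>
    ⟨atomRep ∘ ω, hω, mem_measurableAtom_pi fun k => mem_measurableAtom_atomRep (ω k)⟩).trans
      (ae_iff.1 hrec).le) zero_le

variable [Countable ι] {E : Type*} [MeasurableSpace E] {G : ι → E → E} {ν : Measure E} {K : Set E}

lemma measurable_comp_atomRep (hG : ∀ i, Measurable (G i)) :
    Measurable fun p : E × ι => G (atomRep p.2) p.1 :=
  measurable_from_prod_countable_left' (fun i => hG (atomRep i)) fun i j x h => by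
    simp only [atomRep_eq_of_mem h]

lemma add_stepMeasure_comp_atomRep_le [SFinite ν] (hG : ∀ i, Measurable (G i)) {i : ι}
    (hi : atomRep i ≠ i) :
    m {i} • ν.map (G i) + stepMeasure (fun j => G (atomRep j)) m ν ≤ atomicStepMeasure G m ν := by
  classical
  have hmeas := measurable_comp_atomRep hG
  refine Measure.le_iff.2 fun s hs => ?_
  have hstep : stepMeasure (fun j => G (atomRep j)) m ν s =
      ∑' j, ν (G j ⁻¹' s) * m (atomRep ⁻¹' {j}) := by
    rw [stepMeasure, Measure.map_apply hmeas hs, Measure.prod_apply_symm (hmeas hs)]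
    exact lintegral_comp_atomRep fun j => ν (G j ⁻¹' s)
  have hatomic : atomicStepMeasure G m ν s =
      m {i} * ν (G i ⁻¹' s) + ∑' j, if j = i then 0 else m {j} * ν (G j ⁻¹' s) := by
    rw [← ENNReal.tsum_eq_add_tsum_ite (f := fun j => m {j} * ν (G j ⁻¹' s)) i]
    simp only [atomicStepMeasure, Measure.sum_apply _ hs, Measure.smul_apply,
      Measure.map_apply (hG _) hs, smul_eq_mul]
  rw [Measure.add_apply, Measure.smul_apply, Measure.map_apply (hG i) hs, smul_eq_mul, hstep,
    hatomic]
  refine add_le_add le_rfl (ENNReal.tsum_le_tsum fun j => ?_)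
  split_ifs with hj
  · have hempty : atomRep ⁻¹' {i} = ∅ := eq_empty_of_forall_notMem fun k hk => hi <| by
      rw [← mem_singleton_iff.1 hk, atomRep_eq_of_mem (atomRep_mem_measurableAtom k)]
    rw [hj, hempty, measure_empty, mul_zero]
  · rw [mul_comm]
    gcongr ?_ * _
    exact measure_le_of_forall_exists_mem_measurableAtom fun k hk =>
      ⟨j, mem_singleton j, mem_singleton_iff.1 hk ▸ mem_measurableAtom_atomRep k⟩

variable [IsProbabilityMeasure m]

lemma IsProd.map_first_eq_pi {Q : Measure (ℕ → ι)} (hQ : IsProd m Q) (n : ℕ) :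
    Q.map (fun ω (k : Fin n) => ω k) = Measure.pi fun _ => m := by
  obtain ⟨i₀⟩ := nonempty_of_isProbabilityMeasure m
  refine measure_ext_of_measurableAtom fun c => ?_
  let c' : ℕ → ι := extend Fin.val c fun _ => i₀
  have hc' (k : Fin n) : c' k = c k := Fin.val_injective.extend_apply _ _ k
  have hcylinder : (fun ω (k : Fin n) => ω k) ⁻¹' measurableAtom c =
      {ω : ℕ → ι | ∀ k < n, ω k ∈ measurableAtom (c' k)} := by
    ext ω
    simp only [measurableAtom_pi, mem_preimage, mem_univ_pi, mem_ofPred_eq, ← hc',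
      Fin.forall_iff]
  rw [Measure.map_apply (by fun_prop) (.measurableAtom_of_countable c), hcylinder,
    hQ.measure_atom_cylinder, measurableAtom_pi, Measure.pi_pi,
    ← Fin.prod_univ_eq_prod_range fun k => m {c' k}]
  simp only [hc', measure_measurableAtom]

theorem IsProd.eq_iidMeasure {Q : Measure (ℕ → ι)} (hQ : IsProd m Q) : Q = iidMeasure m := by
  refine eq_iidMeasure_of_forall_range fun n t ht => ?_
  have hbox : (Finset.range n : Set ℕ).pi t =
      (fun ω (k : Fin n) => ω k) ⁻¹' univ.pi fun k : Fin n => t k := by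
    ext ω
    simp only [Set.mem_pi, Finset.coe_range, mem_Iio, mem_preimage, mem_univ, forall_const,
      Fin.forall_iff]
  rw [hbox, ← Measure.map_apply (by fun_prop) (.univ_pi fun k : Fin n => ht k), hQ.map_first_eq_pi,
    Measure.pi_pi, ← Fin.prod_univ_eq_prod_range fun k => m (t k)]

theorem measurableSingletonClass_of_atomicStepMeasure_eq (hG : ∀ i, Measurable (G i))
    (hpos : ∀ i, 0 < m {i}) (hK : MeasurableSet K)
    (hrec : ∀ x, ∀ᵐ ω ∂iidMeasure m, ∃ᶠ n in atTop, ((skewProduct G)^[n] (x, ω)).1 ∈ K)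
    [SFinite ν] (hν : atomicStepMeasure G m ν = ν) (h0 : ν ≠ 0) (hKtop : ν K ≠ ∞) :
    MeasurableSingletonClass ι := by
  refine measurableSingletonClass_of_atomRep fun i => ?_
  by_contra hi
  have hzero : m {i} • ν.map (G i) = 0 :=
    eq_zero_of_add_stepMeasure_le (measurable_comp_atomRep hG) hK
      (fun x => ae_frequently_skewProduct_comp_atomRep_mem (hrec x))
      ((add_stepMeasure_comp_atomRep_le hG hi).trans_eq hν) hKtop
  have huniv : m {i} * ν univ = 0 := by
    simpa [Measure.map_apply (hG i) .univ] using congrArg (· univ) hzero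
  exact mul_ne_zero (hpos i).ne' (Measure.measure_univ_ne_zero.2 h0) huniv

end Discreteness

/-- **Proposition.** Assume (R). Let `ν₁, ν₂` be ergodic invariant Radon measures with
`supp ν₁ ⊆ supp ν₂`. If there are a set `M` unbounded on both sides and an open
interval `J` containing two points of `supp ν₁` such that for every `u ∈ M`, almost
surely `ℓ_n⁻¹(u) ∈ J` only finitely often, then `ν₁ = C • ν₂` for some `C > 0`. -/
theorem ergodic_measures_proportional_of_transient_interval
    {ι : Type*} [Countable ι] [MeasurableSpace ι]
    (G : ι → ℝ → ℝ) (hG : ∀ i, IsOPH (G i))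
    (μm : Measure ι) [IsProbabilityMeasure μm] (hpos : ∀ i, 0 < μm {i})
    (Q : Measure (ℕ → ι)) (hQ : IsProd μm Q)
    (hR : CondR G Q)
    (ν₁ ν₂ : Measure ℝ)
    (hrad₁ : IsRadon ν₁) (herg₁ : IsErg G μm ν₁)
    (hrad₂ : IsRadon ν₂) (herg₂ : IsErg G μm ν₂)
    (hsupp : msupp ν₁ ⊆ msupp ν₂)
    (M : Set ℝ) (hMa : ¬ BddAbove M) (hMb : ¬ BddBelow M)
    (j₁ j₂ : ℝ)
    (hJ : ∃ y₁ ∈ Ioo j₁ j₂ ∩ msupp ν₁, ∃ y₂ ∈ Ioo j₁ j₂ ∩ msupp ν₁, y₁ ≠ y₂)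
    (htrans : ∀ u ∈ M, ∀ᵐ ω ∂Q,
      Set.Finite {n : ℕ | invIter G ω u n ∈ Ioo j₁ j₂}) :
    ∃ C : ℝ≥0, 0 < C ∧ ν₁ = C • ν₂ := by
  have : IsFiniteMeasureOnCompacts ν₁ := ⟨hrad₁⟩
  have : IsFiniteMeasureOnCompacts ν₂ := ⟨hrad₂⟩
  have : IsLocallyFiniteMeasure ν₁ := isLocallyFiniteMeasure_of_isFiniteMeasureOnCompacts
  have : IsLocallyFiniteMeasure ν₂ := isLocallyFiniteMeasure_of_isFiniteMeasureOnCompacts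
  have hGm (i : ι) : Measurable (G i) := (hG i).continuous.measurable
  obtain ⟨q, ⟨hL₁, hR₁⟩, hL₂, hR₂⟩ := exists_measure_Ioo_ne_zero hsupp hJ
  have h0₁ : ν₁ ≠ 0 := fun h => hL₁ (by simp [h])
  have h0₂ : ν₂ ≠ 0 := fun h => hL₂ (by simp [h])
  obtain rfl := hQ.eq_iidMeasure
  obtain ⟨a, b, -, hrec⟩ := hR
  have : MeasurableSingletonClass ι :=
    measurableSingletonClass_of_atomicStepMeasure_eq hGm hpos measurableSet_Icc
      (by simpa only [skewProduct_iterate] using hrec) (herg₁.1.atomicStepMeasure_eq hG h0₁) h0₁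
      isCompact_Icc.measure_lt_top.ne
  exact (herg₁.isErgodicStationary hG h0₁).exists_eq_smul
    (measurable_from_prod_countable_left hGm) hrec hG htrans
    (herg₂.isErgodicStationary hG h0₂) hMa hMb hL₁ hL₂ hR₁ hR₂
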